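/- Let η : ℝ → ℝ be smooth and compactly supported. For every s ∈ ℝ and b ∈ ℝ there exists C > 0 (depending on η, s, b) such that for every τ ∈ (0,1] and every sequence (u_n)_{n∈ℤ} of functions in H^s(𝕋) with only finitely many nonzero terms, ‖(η(nτ) u_n)_{n∈ℤ}‖_{X^{s,b}_τ} ≤ C ‖(u_n)‖_{X^{s,b}_τ}. -/

import Mathlib

noncomputable section

open MeasureTheory Complex Filter Topology AddCircle
open scoped ENNReal

abbrev Torus := AddCircle (2 * Real.pi)

instance : Fact (0 < 2 * Real.pi) := ⟨by positivity⟩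

/-- Japanese bracket `⟨x⟩ = (1+|x|²)^{1/2}`. -/
def jbr (x : ℝ) : ℝ := Real.sqrt (1 + x ^ 2)

/-- The Sobolev `H^s` norm on the torus, via Fourier coefficients. -/
def hsNorm (s : ℝ) (f : Torus → ℂ) : ℝ :=
  Real.sqrt (∑' k : ℤ, jbr k ^ (2 * s) * ‖fourierCoeff f k‖ ^ 2)

/-- Membership in `H^s(𝕋)` (as a function): square integrable with finite `H^s` norm. -/
def InHs (s : ℝ) (f : Torus → ℂ) : Prop :=
  MemLp f 2 haarAddCircle ∧ Summable fun k : ℤ => jbr k ^ (2 * s) * ‖fourierCoeff f k‖ ^ 2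

/-- The frequency cutoff `Π_τ`, keeping the Fourier modes `|k| ≤ τ^{-1/2}`. -/
def projC (τ : ℝ) (f : Torus → ℂ) : Torus → ℂ := fun x =>
  ∑' k : ℤ, if |(k : ℝ)| ≤ τ ^ (-(1 : ℝ) / 2) then fourierCoeff f k * fourier k x else 0

/-- The free Schrödinger group `e^{it∂_x²}`, given by the Fourier multiplier `e^{-itk²}`. -/
def schrod (t : ℝ) (f : Torus → ℂ) : Torus → ℂ := fun x =>
  ∑' k : ℤ, Complex.exp (-Complex.I * t * (k : ℂ) ^ 2) * fourierCoeff f k * fourier k x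

/-- Continuity on `I` with values in `L²(𝕋)`. -/
def ContL2On (I : Set ℝ) (u : ℝ → Torus → ℂ) : Prop :=
  (∀ t ∈ I, MemLp (u t) 2 haarAddCircle) ∧
  ∀ t ∈ I, Tendsto (fun t' => eLpNorm (u t' - u t) 2 haarAddCircle) (nhdsWithin t I) (nhds 0)

/-- Continuity on `I` with values in `H^s(𝕋)`. -/
def ContHsOn (s : ℝ) (I : Set ℝ) (u : ℝ → Torus → ℂ) : Prop :=
  (∀ t ∈ I, InHs s (u t)) ∧
  ∀ t ∈ I, Tendsto (fun t' => hsNorm s (u t' - u t)) (nhdsWithin t I) (nhds 0)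

/-- The cubic nonlinearity `|f|² f` (pointwise). -/
def cubic (f : Torus → ℂ) : Torus → ℂ := fun x => (‖f x‖ : ℂ) ^ 2 * f x

/-- The filtered cubic nonlinearity `Π_τ(|Π_τ f|² Π_τ f)`. -/
def projCubic (τ : ℝ) (f : Torus → ℂ) : Torus → ℂ := projC τ (cubic (projC τ f))

/-- `v` is the (global-in-time) mild solution of the projected equation
`i∂_t v = -∂_x² v - μ Π_τ(|Π_τ v|² Π_τ v)`, `v(0) = Π_τ u₀`. -/
def IsProjSolution (μ τ : ℝ) (u₀ : Torus → ℂ) (v : ℝ → Torus → ℂ) : Prop :=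
  ContL2On Set.univ v ∧
  ∀ t : ℝ, ∀ x : Torus,
    v t x = schrod t (projC τ u₀) x
      + Complex.I * μ * ∫ s in (0 : ℝ)..t, schrod (t - s) (projCubic τ (v s)) x

/-- The cubic NLS `i∂_t u = -∂_x² u - μ |u|² u` holds in the sense of space-time
distributions on `(0,T) × 𝕋` (tested against `ψ(t) e^{-ikx}`). -/
def DistribSolOn (μ T : ℝ) (u : ℝ → Torus → ℂ) : Prop :=
  ∀ k : ℤ, ∀ ψ : ℝ → ℂ, ContDiff ℝ (⊤ : ℕ∞) ψ → tsupport ψ ⊆ Set.Ioo 0 T →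
    -Complex.I * ∫ t : ℝ, deriv ψ t * fourierCoeff (u t) k
      = (k : ℂ) ^ 2 * ∫ t : ℝ, ψ t * fourierCoeff (u t) k
        - (μ : ℂ) * ∫ t : ℝ, ψ t * fourierCoeff (cubic (u t)) k

/-- `u ∈ L⁴((0,T) × 𝕋)`. -/
def SpaceTimeL4 (T : ℝ) (u : ℝ → Torus → ℂ) : Prop :=
  MemLp (fun p : ℝ × Torus => u p.1 p.2) 4
    ((volume.restrict (Set.Ioo 0 T)).prod haarAddCircle)

/-- Space-time Fourier transform `ṽ(σ,k)` of `v : ℝ × 𝕋 → ℂ`. -/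
def stFT (v : ℝ → Torus → ℂ) (σ : ℝ) (k : ℤ) : ℂ :=
  ∫ t : ℝ, Complex.exp (-Complex.I * σ * t) * fourierCoeff (v t) k

/-- The (continuous) Bourgain `X^{s,b}` norm, valued in `ℝ≥0∞`. -/
def XcNorm (s b : ℝ) (v : ℝ → Torus → ℂ) : ℝ≥0∞ :=
  (∫⁻ σ : ℝ, ∑' k : ℤ,
      ENNReal.ofReal ((1 + |(k : ℝ)|) ^ (2 * s) * (1 + |σ + (k : ℝ) ^ 2|) ^ (2 * b)
        * ‖stFT v σ k‖ ^ 2)) ^ (1 / 2 : ℝ)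

/-- The restriction norm `‖u‖_{X^{s,b}(T)}` is bounded by `M`: some extension of `u`
from `(0,T)` has `X^{s,b}` norm at most `M`. -/
def XresBounded (s b T : ℝ) (u : ℝ → Torus → ℂ) (M : ℝ≥0∞) : Prop :=
  ∃ v : ℝ → Torus → ℂ, (∀ t ∈ Set.Ioo 0 T, v t = u t) ∧ XcNorm s b v ≤ M

/-- `u` is a Bourgain-class solution of cubic NLS on `[0,T]` with datum `u₀`. -/
def IsNLSSolution (μ T : ℝ) (u₀ : Torus → ℂ) (u : ℝ → Torus → ℂ) : Prop :=
  ContL2On (Set.Icc 0 T) u ∧ SpaceTimeL4 T u ∧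
  (∃ b ∈ Set.Ioo (1 / 2 : ℝ) (5 / 8 : ℝ), ∃ v : ℝ → Torus → ℂ,
      (∀ t ∈ Set.Ioo 0 T, v t = u t) ∧ XcNorm 0 b v < ⊤) ∧
  u 0 = u₀ ∧ DistribSolOn μ T u

/-- One step of the pointwise nonlinear flow `e^{iμτ|Π_τ f|²} Π_τ f`. -/
def lieFlow (μ τ : ℝ) (f : Torus → ℂ) : Torus → ℂ := fun x =>
  Complex.exp (Complex.I * μ * τ * (‖projC τ f x‖ : ℂ) ^ 2) * projC τ f x

/-- The filtered Lie splitting scheme `u⁰ = Π_τ u₀`,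
`u^{n+1} = e^{iτ∂_x²} Π_τ (e^{iμτ|Π_τ uⁿ|²} Π_τ uⁿ)`. -/
def lieScheme (μ τ : ℝ) (u₀ : Torus → ℂ) : ℕ → Torus → ℂ
  | 0 => projC τ u₀
  | n + 1 => schrod τ (projC τ (lieFlow μ τ (lieScheme μ τ u₀ n)))

/-- `d_τ(σ) = (e^{iτσ}-1)/τ`. -/
def dtau (τ σ : ℝ) : ℂ := (Complex.exp (Complex.I * τ * σ) - 1) / τ

/-- The discrete Bourgain `X^{s,b}_τ` norm of a sequence of functions on the torus. -/
def XdNorm (τ s b : ℝ) (u : ℤ → Torus → ℂ) : ℝ :=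
  Real.sqrt (∫ σ in Set.Ioc (-(Real.pi / τ)) (Real.pi / τ),
    ∑' k : ℤ, jbr k ^ (2 * s) * jbr ‖dtau τ (σ - (k : ℝ) ^ 2)‖ ^ (2 * b) *
      ‖(τ : ℂ) * ∑' m : ℤ, fourierCoeff (u m) k * Complex.exp (Complex.I * m * τ * σ)‖ ^ 2)

/-- The discrete space-time Lebesgue norm `‖(u_n)‖_{ℓ^p_τ L^q}`. -/
def lpLqNorm (τ p q : ℝ) (u : ℤ → Torus → ℂ) : ℝ :=
  (τ * ∑' n : ℤ, (eLpNorm (u n) (ENNReal.ofReal q) haarAddCircle).toReal ^ p) ^ (1 / p)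

/-!
By Fourier inversion `η(nτ) = ∫ η̂(ξ) e^{2πi nτξ} dξ`, so multiplication by `η(nτ)` replaces
`ũ(·, k)` by the average of its translates `ũ(· + 2πξ, k)` against `η̂(ξ)`. Since `d_τ` is
1-Lipschitz uniformly in `τ`, Peetre's inequality bounds the cost of translating the weight
`⟨d_τ(σ - k²)⟩^b` by `(1 + 2π|ξ|)^{|b|}`, which the decay of `η̂` absorbs. The weighted amplitude is
`2π/τ`-periodic in `σ`, so its `L²` norm over a period is translation invariant, and Minkowski's
inequality gives the bound with the constant `∫ |η̂(ξ)| (1 + 2π|ξ|)^{|b|} dξ`, independent of `τ`.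
-/

open scoped FourierTransform SchwartzMap

section Lebesgue

theorem sq_lintegral_mul_le_lintegral_mul_lintegral_mul_sq {α : Type*} [MeasurableSpace α]
    {μ : Measure α} {h Φ : α → ℝ≥0∞} (hh : AEMeasurable h μ) (hΦ : AEMeasurable Φ μ) :
    (∫⁻ x, h x * Φ x ∂μ) ^ 2 ≤ (∫⁻ x, h x ∂μ) * ∫⁻ x, h x * Φ x ^ 2 ∂μ := by
  have split_sqrt (c y : ℝ≥0∞) : c * y = c ^ (1 / 2 : ℝ) * (c * y ^ 2) ^ (1 / 2 : ℝ) := by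
    rw [ENNReal.mul_rpow_of_nonneg _ _ (by norm_num), ← ENNReal.rpow_natCast_mul, ← mul_assoc,
      ← ENNReal.rpow_add_of_nonneg _ _ (by norm_num) (by norm_num)]
    norm_num
  have sqrt_sq (c : ℝ≥0∞) : (c ^ (1 / 2 : ℝ)) ^ 2 = c := by
    rw [← ENNReal.rpow_mul_natCast]
    norm_num
  calc (∫⁻ x, h x * Φ x ∂μ) ^ 2
      = (∫⁻ x, h x ^ (1 / 2 : ℝ) * (h x * Φ x ^ 2) ^ (1 / 2 : ℝ) ∂μ) ^ 2 := by
        simp only [← split_sqrt]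
    _ ≤ ((∫⁻ x, h x ∂μ) ^ (1 / 2 : ℝ) * (∫⁻ x, h x * Φ x ^ 2 ∂μ) ^ (1 / 2 : ℝ)) ^ 2 := by
        gcongr
        exact ENNReal.lintegral_mul_norm_pow_le hh (hh.mul (hΦ.pow_const 2))
          (by norm_num) (by norm_num) (by norm_num)
    _ = (∫⁻ x, h x ∂μ) * ∫⁻ x, h x * Φ x ^ 2 ∂μ := by rw [mul_pow, sqrt_sq, sqrt_sq]

variable {Φ : ℝ → ℝ≥0∞} {T : ℝ}

theorem setLIntegral_Ioc_comp_add_right_of_periodic (hΦ : Function.Periodic Φ T) (hT : 0 < T)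
    (a l : ℝ) :
    ∫⁻ x in Set.Ioc a (a + T), Φ (x + l) = ∫⁻ x in Set.Ioc a (a + T), Φ x := by
  have : VAddInvariantMeasure (AddSubgroup.zmultiples T) ℝ volume :=
    ⟨fun c s _ => measure_preimage_add _ _ _⟩
  calc ∫⁻ x in Set.Ioc a (a + T), Φ (x + l)
      = ∫⁻ x in Set.Ioc (a + l) (a + l + T), Φ x := by
        rw [(measurePreserving_add_right volume l).setLIntegral_comp_emb
          (measurableEmbedding_addRight l), Set.image_add_const_Ioc, add_right_comm]
    _ = ∫⁻ x in Set.Ioc a (a + T), Φ x :=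
        (isAddFundamentalDomain_Ioc hT _).setLIntegral_eq (isAddFundamentalDomain_Ioc hT _) Φ
          hΦ.map_vadd_zmultiples

theorem setLIntegral_sq_lintegral_mul_translate_le {Ω : Type*} [MeasurableSpace Ω]
    {μ : Measure Ω} [SFinite μ] {h : Ω → ℝ≥0∞} (hh : AEMeasurable h μ) (hΦm : Measurable Φ)
    (hΦ : Function.Periodic Φ T) (hT : 0 < T) {l : Ω → ℝ} (hl : Measurable l) (a : ℝ) :
    ∫⁻ σ in Set.Ioc a (a + T), (∫⁻ ω, h ω * Φ (σ + l ω) ∂μ) ^ 2 ≤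
      (∫⁻ ω, h ω ∂μ) ^ 2 * ∫⁻ σ in Set.Ioc a (a + T), Φ σ ^ 2 := by
  have hmeas : AEMeasurable (fun p : ℝ × Ω => h p.2 * Φ (p.1 + l p.2) ^ 2)
      ((volume.restrict (Set.Ioc a (a + T))).prod μ) :=
    hh.comp_snd.mul (by fun_prop)
  have htranslate (ω : Ω) : ∫⁻ σ in Set.Ioc a (a + T), h ω * Φ (σ + l ω) ^ 2 =
      h ω * ∫⁻ σ in Set.Ioc a (a + T), Φ σ ^ 2 := by
    rw [lintegral_const_mul _ (by fun_prop)]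
    congr 1
    exact setLIntegral_Ioc_comp_add_right_of_periodic (hΦ.comp (· ^ 2)) hT a (l ω)
  calc ∫⁻ σ in Set.Ioc a (a + T), (∫⁻ ω, h ω * Φ (σ + l ω) ∂μ) ^ 2
      ≤ ∫⁻ σ in Set.Ioc a (a + T), (∫⁻ ω, h ω ∂μ) * ∫⁻ ω, h ω * Φ (σ + l ω) ^ 2 ∂μ :=
        lintegral_mono fun σ =>
          sq_lintegral_mul_le_lintegral_mul_lintegral_mul_sq hh (by fun_prop)
    _ = (∫⁻ ω, h ω ∂μ) *
        ∫⁻ ω, (∫⁻ σ in Set.Ioc a (a + T), h ω * Φ (σ + l ω) ^ 2) ∂μ := by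
        rw [lintegral_const_mul'' _ hmeas.lintegral_prod_right', lintegral_lintegral_swap hmeas]
    _ = (∫⁻ ω, h ω ∂μ) ^ 2 * ∫⁻ σ in Set.Ioc a (a + T), Φ σ ^ 2 := by
        simp only [htranslate]
        rw [lintegral_mul_const'' _ hh, sq, mul_assoc]

end Lebesgue

section JapaneseBracket

theorem one_le_jbr (x : ℝ) : 1 ≤ jbr x :=
  Real.one_le_sqrt.2 (le_add_of_nonneg_right (sq_nonneg x))

theorem jbr_pos (x : ℝ) : 0 < jbr x := one_pos.trans_le (one_le_jbr x)

theorem jbr_rpow_nonneg (x p : ℝ) : 0 ≤ jbr x ^ p := Real.rpow_nonneg (jbr_pos x).le p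

theorem abs_le_jbr (x : ℝ) : |x| ≤ jbr x :=
  Real.abs_le_sqrt (le_add_of_nonneg_left zero_le_one)

theorem continuous_jbr : Continuous jbr := by
  unfold jbr
  fun_prop

theorem jbr_le_add_abs_sub (x y : ℝ) : jbr x ≤ jbr y + |x - y| := by
  have hy : jbr y ^ 2 = 1 + y ^ 2 := Real.sq_sqrt (by positivity)
  have hcross : y * (x - y) ≤ jbr y * |x - y| :=
    (le_abs_self _).trans ((abs_mul _ _).trans_le (by gcongr; exact abs_le_jbr y))
  refine Real.sqrt_le_iff.2 ⟨add_nonneg (jbr_pos y).le (abs_nonneg _), ?_⟩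
  nlinarith [sq_abs (x - y)]

theorem jbr_le_one_add_mul_jbr {x y l : ℝ} (h : |x - y| ≤ l) : jbr x ≤ (1 + l) * jbr y := by
  nlinarith [jbr_le_add_abs_sub x y, one_le_jbr y, abs_nonneg (x - y)]

theorem rpow_le_rpow_abs_mul_rpow {x y c : ℝ} (hx : 0 < x) (hy : 0 < y) (hxy : x ≤ c * y)
    (hyx : y ≤ c * x) (p : ℝ) : x ^ p ≤ c ^ |p| * y ^ p := by
  have hc : 0 < c := pos_of_mul_pos_left (hx.trans_le hxy) hy.le
  rcases le_total 0 p with hp | hp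
  · rw [abs_of_nonneg hp, ← Real.mul_rpow hc.le hy.le]
    exact Real.rpow_le_rpow hx.le hxy hp
  · rw [abs_of_nonpos hp, Real.rpow_neg hc.le, ← Real.inv_rpow hc.le,
      ← Real.mul_rpow (by positivity) hy.le]
    exact Real.rpow_le_rpow_of_nonpos (by positivity) ((inv_mul_le_iff₀ hc).2 hyx) hp

theorem jbr_rpow_le {x y l : ℝ} (h : |x - y| ≤ l) (p : ℝ) :
    jbr x ^ p ≤ (1 + l) ^ |p| * jbr y ^ p :=
  rpow_le_rpow_abs_mul_rpow (jbr_pos x) (jbr_pos y) (jbr_le_one_add_mul_jbr h)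
    (jbr_le_one_add_mul_jbr (abs_sub_comm x y ▸ h)) p

theorem continuous_jbr_rpow (p : ℝ) : Continuous fun x => jbr x ^ p :=
  continuous_jbr.rpow_const fun x => Or.inl (jbr_pos x).ne'

variable {E : Type*} [NormedAddCommGroup E] [NormedSpace ℝ E] {μ : Measure ℝ} {g : ℝ → E} {r : ℝ}

theorem integrable_of_integrable_jbr_rpow_smul (hr : 0 ≤ r)
    (hg : Integrable (fun ξ => jbr ξ ^ r • g ξ) μ) : Integrable g μ := by
  have hbound (ξ : ℝ) : ‖jbr ξ ^ (-r)‖ ≤ 1 := by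
    rw [Real.norm_of_nonneg (jbr_rpow_nonneg ξ _)]
    exact Real.rpow_le_one_of_one_le_of_nonpos (one_le_jbr ξ) (neg_nonpos.2 hr)
  convert hg.bdd_smul 1 (continuous_jbr_rpow (-r)).aestronglyMeasurable (ae_of_all _ hbound)
    using 1
  ext ξ
  rw [Pi.smul_apply', smul_smul, ← Real.rpow_add (jbr_pos ξ), neg_add_cancel, Real.rpow_zero,
    one_smul]

theorem lintegral_enorm_mul_one_add_abs_rpow_ne_top (hr : 0 ≤ r)
    (hg : Integrable (fun ξ => jbr ξ ^ r • g ξ) μ) (c : ℝ) :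
    ∫⁻ ξ, ‖g ξ‖ₑ * ENNReal.ofReal ((1 + |c * ξ|) ^ r) ∂μ ≠ ∞ := by
  have hweight (ξ : ℝ) : (1 + |c * ξ|) ^ r ≤ (1 + |c|) ^ r * jbr ξ ^ r := by
    rw [← Real.mul_rpow (by positivity) (jbr_pos ξ).le, abs_mul, one_add_mul]
    gcongr
    exacts [one_le_jbr ξ, abs_le_jbr ξ]
  have hbound (ξ : ℝ) : ‖g ξ‖ₑ * ENNReal.ofReal ((1 + |c * ξ|) ^ r) ≤
      ENNReal.ofReal ((1 + |c|) ^ r) * ‖jbr ξ ^ r • g ξ‖ₑ := by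
    rw [enorm_smul, Real.enorm_of_nonneg (jbr_rpow_nonneg ξ r), ← mul_assoc,
      ← ENNReal.ofReal_mul (by positivity), mul_comm]
    gcongr
    exact hweight ξ
  refine ne_top_of_le_ne_top ?_ (lintegral_mono hbound)
  rw [lintegral_const_mul' _ _ ENNReal.ofReal_ne_top]
  exact ENNReal.mul_ne_top ENNReal.ofReal_ne_top hg.2.ne

theorem integrable_jbr_rpow_smul_schwartzMap (r : ℝ) (f : 𝓢(ℝ, E)) :
    Integrable fun ξ => jbr ξ ^ r • f ξ := by
  have hgrowth := Function.hasTemperateGrowth_one_add_norm_sq_rpow ℝ (r / 2)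
  convert (SchwartzMap.smulLeftCLM E (fun ξ : ℝ => (1 + ‖ξ‖ ^ 2) ^ (r / 2)) f).integrable
    (μ := volume) using 2 with ξ
  rw [SchwartzMap.smulLeftCLM_apply_apply hgrowth, jbr, Real.sqrt_eq_rpow,
    ← Real.rpow_mul (by positivity), Real.norm_eq_abs, sq_abs, one_div_mul_eq_div]

theorem exists_fourierInv_eq_of_contDiff_of_hasCompactSupport {f : ℝ → ℂ}
    (hf : ContDiff ℝ (⊤ : ℕ∞) f) (hfc : HasCompactSupport f) (r : ℝ) :
    ∃ g : ℝ → ℂ, 𝓕⁻ g = f ∧ Integrable fun ξ => jbr ξ ^ r • g ξ := by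
  let φ : 𝓢(ℝ, ℂ) := hfc.toSchwartzMap hf
  let ψ : 𝓢(ℝ, ℂ) := 𝓕 φ
  refine ⟨ψ, ?_, integrable_jbr_rpow_smul_schwartzMap r ψ⟩
  rw [← SchwartzMap.fourierInv_coe, FourierTransform.fourierInv_fourier_eq]
  rfl

end JapaneseBracket

section Dtau

variable {τ : ℝ}

theorem lipschitzWith_dtau (τ : ℝ) : LipschitzWith 1 (dtau τ) := by
  refine LipschitzWith.of_dist_le_mul fun σ σ' => ?_
  have hfactor : dtau τ σ - dtau τ σ' =
      cexp (I * (τ * σ' : ℝ)) * (cexp (I * (τ * (σ - σ') : ℝ)) - 1) / τ := by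
    rw [mul_sub_one, ← Complex.exp_add, dtau, dtau, ← sub_div]
    congr 1
    push_cast
    ring_nf
  rw [NNReal.coe_one, one_mul, dist_eq_norm, hfactor, norm_div, norm_mul,
    norm_exp_I_mul_ofReal, one_mul, norm_real]
  refine div_le_of_le_mul₀ (norm_nonneg _) dist_nonneg ?_
  rw [Real.dist_eq, ← Real.norm_eq_abs, mul_comm ‖σ - σ'‖, ← norm_mul]
  exact Real.norm_exp_I_mul_ofReal_sub_one_le

theorem periodic_dtau (hτ : τ ≠ 0) : Function.Periodic (dtau τ) (2 * Real.pi / τ) := fun σ => by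
  have hτ' : (τ : ℂ) ≠ 0 := ofReal_ne_zero.2 hτ
  have hphase : I * τ * (σ + 2 * Real.pi / τ : ℝ) = I * τ * σ + 2 * Real.pi * I := by
    push_cast
    field_simp
  rw [dtau, hphase, exp_periodic, dtau]

theorem norm_dtau_le (τ σ : ℝ) : ‖dtau τ σ‖ ≤ 2 / |τ| := by
  rw [dtau, norm_div, norm_real, Real.norm_eq_abs]
  gcongr
  calc ‖cexp (I * τ * σ) - 1‖ ≤ ‖cexp (I * (τ * σ : ℝ))‖ + ‖(1 : ℂ)‖ := by
        rw [mul_assoc, ← ofReal_mul]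
        exact norm_sub_le _ _
    _ = 2 := by rw [norm_exp_I_mul_ofReal, norm_one, one_add_one_eq_two]

theorem jbr_norm_dtau_rpow_le_translate (τ b σ l : ℝ) :
    jbr ‖dtau τ σ‖ ^ b ≤ (1 + |l|) ^ |b| * jbr ‖dtau τ (σ + l)‖ ^ b := by
  refine jbr_rpow_le ((abs_norm_sub_norm_le _ _).trans ?_) b
  simpa [dist_eq_norm] using (lipschitzWith_dtau τ).dist_le_mul σ (σ + l)

theorem jbr_norm_dtau_rpow_le (τ b σ : ℝ) : jbr ‖dtau τ σ‖ ^ b ≤ (1 + 2 / |τ|) ^ |b| := by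
  have h : |‖dtau τ σ‖ - 0| ≤ 2 / |τ| := by simpa using norm_dtau_le τ σ
  simpa [jbr] using jbr_rpow_le h b

end Dtau

section DiscreteFourierTransform

/-- The Fourier transform `σ ↦ τ ∑ₘ aₘ e^{imτσ}` of a sequence sampled at the times `mτ`, so that
`ũ(σ, k)` is `sampledFT τ (fun m => fourierCoeff (u m) k) σ`. A divergent series gives `0`. -/
def sampledFT (τ : ℝ) (a : ℤ → ℂ) (σ : ℝ) : ℂ :=
  τ * ∑' m : ℤ, a m * cexp (I * m * τ * σ)

variable {τ : ℝ} {a : ℤ → ℂ}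

theorem periodic_sampledFT (hτ : τ ≠ 0) (a : ℤ → ℂ) :
    Function.Periodic (sampledFT τ a) (2 * Real.pi / τ) := fun σ => by
  have hτ' : (τ : ℂ) ≠ 0 := ofReal_ne_zero.2 hτ
  have hphase (m : ℤ) : cexp (I * m * τ * (σ + 2 * Real.pi / τ : ℝ)) = cexp (I * m * τ * σ) := by
    rw [← mul_one (cexp (I * m * τ * σ)), ← exp_int_mul_two_pi_mul_I m, ← Complex.exp_add]
    congr 1
    push_cast
    field_simp
  simp only [sampledFT, hphase]

theorem sampledFT_eq_sum {S : Finset ℤ} (hS : Function.support a ⊆ S) (τ σ : ℝ) :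
    sampledFT τ a σ = τ * ∑ m ∈ S, a m * cexp (I * m * τ * σ) := by
  rw [sampledFT, tsum_eq_sum fun m hm => ?_]
  rw [Function.notMem_support.1 fun h => hm (hS h), zero_mul]

theorem continuous_sampledFT (ha : a.support.Finite) (τ : ℝ) : Continuous (sampledFT τ a) := by
  simp only [funext (sampledFT_eq_sum ha.coe_toFinset.ge τ)]
  fun_prop

theorem norm_sampledFT_sq_le {S : Finset ℤ} (hS : Function.support a ⊆ S) (τ σ : ℝ) :
    ‖sampledFT τ a σ‖ ^ 2 ≤ τ ^ 2 * (S.card * ∑ m ∈ S, ‖a m‖ ^ 2) := by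
  have hphase (m : ℤ) : ‖cexp (I * m * τ * σ)‖ = 1 := by
    simpa [mul_assoc] using norm_exp_I_mul_ofReal (m * τ * σ)
  calc ‖sampledFT τ a σ‖ ^ 2 = τ ^ 2 * ‖∑ m ∈ S, a m * cexp (I * m * τ * σ)‖ ^ 2 := by
        rw [sampledFT_eq_sum hS, norm_mul, norm_real, mul_pow, Real.norm_eq_abs, sq_abs]
    _ ≤ τ ^ 2 * (∑ m ∈ S, ‖a m‖) ^ 2 := by
        gcongr
        exact norm_sum_le_of_le S fun m _ => by rw [norm_mul, hphase, mul_one]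
    _ ≤ τ ^ 2 * (S.card * ∑ m ∈ S, ‖a m‖ ^ 2) := by
        gcongr
        exact sq_sum_le_card_mul_sum_sq

theorem sampledFT_fourierInv_mul {g : ℝ → ℂ} (hg : Integrable g) (ha : a.support.Finite)
    (τ σ : ℝ) :
    sampledFT τ (fun m => 𝓕⁻ g (m * τ) * a m) σ =
      ∫ ξ, g ξ * sampledFT τ a (σ + 2 * Real.pi * ξ) := by
  have hsupp : Function.support a ⊆ ha.toFinset := ha.coe_toFinset.ge
  have hsupp_mul : (Function.support fun m : ℤ => 𝓕⁻ g (m * τ) * a m) ⊆ ha.toFinset :=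
    (Function.support_mul_subset_right _ _).trans hsupp
  have hexpand (ξ : ℝ) : g ξ * sampledFT τ a (σ + 2 * Real.pi * ξ) =
      ∑ m ∈ ha.toFinset, τ * a m * cexp (I * m * τ * σ) *
        (𝐞 (ξ * (m * τ)) • g ξ) := by
    rw [sampledFT_eq_sum hsupp, Finset.mul_sum, Finset.mul_sum]
    refine Finset.sum_congr rfl fun m _ => ?_
    have hphase : cexp (I * m * τ * (σ + 2 * Real.pi * ξ : ℝ)) =
        cexp (I * m * τ * σ) * 𝐞 (ξ * (m * τ)) := by
      rw [Real.fourierChar_apply, ← Complex.exp_add]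
      push_cast
      ring_nf
    rw [hphase, Circle.smul_def, smul_eq_mul]
    ring
  have hint (m : ℤ) : Integrable fun ξ : ℝ => 𝐞 (ξ * (m * τ)) • g ξ :=
    hg.mono ((Continuous.aestronglyMeasurable (by fun_prop)).smul hg.aestronglyMeasurable)
      (ae_of_all _ fun ξ => (Circle.norm_smul _ _).le)
  simp only [hexpand]
  rw [integral_finsetSum _ fun m _ => (hint m).const_mul _, sampledFT_eq_sum hsupp_mul,
    Finset.mul_sum]
  refine Finset.sum_congr rfl fun m _ => ?_
  rw [integral_const_mul, Real.fourierInv_eq]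
  simp only [RCLike.inner_apply, conj_trivial, mul_comm _ (m * τ : ℝ)]
  ring

end DiscreteFourierTransform

section DiscreteBourgainNorm

theorem InHs.const_mul {s : ℝ} {f : Torus → ℂ} (hf : InHs s f) (c : ℂ) :
    InHs s fun x => c * f x := by
  refine ⟨hf.1.const_mul c, (hf.2.mul_left (‖c‖ ^ 2)).congr fun k => ?_⟩
  rw [fourierCoeff.const_mul, norm_mul]
  ring

theorem support_fourierCoeff_subset {ι : Type*} (u : ι → Torus → ℂ) (k : ℤ) :
    (Function.support fun m => fourierCoeff (u m) k) ⊆ Function.support u :=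
  Function.support_comp_subset (g := fun f : Torus → ℂ => fourierCoeff f k)
    (by simp [fourierCoeff]) u

/-- The quantity `⟨k⟩^s ⟨d_τ(σ - k²)⟩^b |ũ(σ, k)|`, whose square is the integrand of the `X^{s,b}_τ`
norm. -/
def xdAmplitude (τ s b : ℝ) (u : ℤ → Torus → ℂ) (k : ℤ) (σ : ℝ) : ℝ :=
  jbr k ^ s * jbr ‖dtau τ (σ - (k : ℝ) ^ 2)‖ ^ b *
    ‖sampledFT τ (fun m => fourierCoeff (u m) k) σ‖

variable {τ s b : ℝ} {u : ℤ → Torus → ℂ}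

theorem xdAmplitude_nonneg (τ s b : ℝ) (u : ℤ → Torus → ℂ) (k : ℤ) (σ : ℝ) :
    0 ≤ xdAmplitude τ s b u k σ :=
  mul_nonneg (mul_nonneg (jbr_rpow_nonneg _ _) (jbr_rpow_nonneg _ _)) (norm_nonneg _)

theorem periodic_xdAmplitude (hτ : τ ≠ 0) (s b : ℝ) (u : ℤ → Torus → ℂ) (k : ℤ) :
    Function.Periodic (xdAmplitude τ s b u k) (2 * Real.pi / τ) := fun σ => by
  simp only [xdAmplitude, periodic_sampledFT hτ _ σ, add_sub_right_comm σ, periodic_dtau hτ _]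

theorem continuous_xdAmplitude (hu : u.support.Finite) (τ s b : ℝ) (k : ℤ) :
    Continuous (xdAmplitude τ s b u k) := by
  have hweight : Continuous fun σ : ℝ => jbr ‖dtau τ (σ - (k : ℝ) ^ 2)‖ ^ b :=
    (continuous_jbr_rpow b).comp
      ((lipschitzWith_dtau τ).continuous.comp (continuous_sub_right _)).norm
  exact (continuous_const.mul hweight).mul
    (continuous_sampledFT (hu.subset (support_fourierCoeff_subset u k)) τ).norm

theorem XdNorm_eq_sqrt_integral_tsum_xdAmplitude_sq (τ s b : ℝ) (u : ℤ → Torus → ℂ) :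
    XdNorm τ s b u =
      √(∫ σ in Set.Ioc (-(Real.pi / τ)) (Real.pi / τ), ∑' k, xdAmplitude τ s b u k σ ^ 2) := by
  simp only [XdNorm, xdAmplitude, sampledFT, mul_pow, ← Real.rpow_mul_natCast (jbr_pos _).le,
    Nat.cast_ofNat, mul_comm (2 : ℝ)]

theorem exists_summable_xdAmplitude_sq_le (hu : ∀ n, InHs s (u n)) (hfin : u.support.Finite)
    (τ b : ℝ) : ∃ M : ℤ → ℝ, Summable M ∧ ∀ k σ, xdAmplitude τ s b u k σ ^ 2 ≤ M k := by
  refine ⟨fun k => ((1 + 2 / |τ|) ^ |b|) ^ 2 * (τ ^ 2 * hfin.toFinset.card) *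
      ∑ m ∈ hfin.toFinset, jbr k ^ (2 * s) * ‖fourierCoeff (u m) k‖ ^ 2,
    (summable_sum fun m _ => (hu m).2).mul_left _, fun k σ => ?_⟩
  have hsupp : (Function.support fun m => fourierCoeff (u m) k) ⊆ hfin.toFinset :=
    (support_fourierCoeff_subset u k).trans hfin.coe_toFinset.ge
  have hk := jbr_rpow_nonneg k (2 * s)
  have hd := jbr_rpow_nonneg ‖dtau τ (σ - (k : ℝ) ^ 2)‖ b
  calc xdAmplitude τ s b u k σ ^ 2
      = jbr k ^ (2 * s) * (jbr ‖dtau τ (σ - (k : ℝ) ^ 2)‖ ^ b) ^ 2 *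
          ‖sampledFT τ (fun m => fourierCoeff (u m) k) σ‖ ^ 2 := by
        rw [xdAmplitude, mul_pow, mul_pow, mul_comm 2 s, Real.rpow_mul (jbr_pos _).le,
          Real.rpow_two]
    _ ≤ jbr k ^ (2 * s) * ((1 + 2 / |τ|) ^ |b|) ^ 2 *
          (τ ^ 2 * (hfin.toFinset.card * ∑ m ∈ hfin.toFinset, ‖fourierCoeff (u m) k‖ ^ 2)) := by
        gcongr
        · exact jbr_norm_dtau_rpow_le τ b _
        · exact norm_sampledFT_sq_le hsupp τ σ
    _ = _ := by
        simp only [← Finset.mul_sum]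
        ring

theorem ofReal_XdNorm_sq (hu : ∀ n, InHs s (u n)) (hfin : u.support.Finite) (τ b : ℝ) :
    ENNReal.ofReal (XdNorm τ s b u) ^ 2 =
      ∑' k, ∫⁻ σ in Set.Ioc (-(Real.pi / τ)) (Real.pi / τ),
        ENNReal.ofReal (xdAmplitude τ s b u k σ) ^ 2 := by
  obtain ⟨M, hM, hle⟩ := exists_summable_xdAmplitude_sq_le hu hfin τ b
  have hcont (k : ℤ) := continuous_xdAmplitude hfin τ s b k
  have hnonneg (k : ℤ) (σ : ℝ) : 0 ≤ xdAmplitude τ s b u k σ ^ 2 := sq_nonneg _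
  have hsum (σ : ℝ) : Summable fun k => xdAmplitude τ s b u k σ ^ 2 :=
    hM.of_nonneg_of_le (hnonneg · σ) (hle · σ)
  have htsum : Continuous fun σ => ∑' k, xdAmplitude τ s b u k σ ^ 2 :=
    continuous_tsum (fun k => (hcont k).pow 2) hM fun k σ => by
      rw [Real.norm_of_nonneg (hnonneg k σ)]
      exact hle k σ
  have htsum_nonneg (σ : ℝ) : 0 ≤ ∑' k, xdAmplitude τ s b u k σ ^ 2 := tsum_nonneg (hnonneg · σ)
  rw [XdNorm_eq_sqrt_integral_tsum_xdAmplitude_sq, ← ENNReal.ofReal_pow (Real.sqrt_nonneg _),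
    Real.sq_sqrt (integral_nonneg htsum_nonneg),
    ofReal_integral_eq_lintegral_ofReal htsum.integrableOn_Ioc (ae_of_all _ htsum_nonneg)]
  simp only [ENNReal.ofReal_tsum_of_nonneg (hnonneg · _) (hsum _)]
  rw [lintegral_tsum fun k => by fun_prop]
  simp only [ENNReal.ofReal_pow (xdAmplitude_nonneg _ _ _ _ _ _)]

end DiscreteBourgainNorm

section Multiplier

variable {g : ℝ → ℂ} {u : ℤ → Torus → ℂ}

theorem ofReal_xdAmplitude_fourierInv_mul_le (hg : Integrable g) (hu : u.support.Finite)
    (τ s b : ℝ) (k : ℤ) (σ : ℝ) :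
    ENNReal.ofReal (xdAmplitude τ s b (fun n x => 𝓕⁻ g (n * τ) * u n x) k σ) ≤
      ∫⁻ ξ, ‖g ξ‖ₑ * ENNReal.ofReal ((1 + |2 * Real.pi * ξ|) ^ |b|) *
        ENNReal.ofReal (xdAmplitude τ s b u k (σ + 2 * Real.pi * ξ)) := by
  set F := sampledFT τ fun m => fourierCoeff (u m) k
  set w : ℝ → ℝ := fun σ => jbr k ^ s * jbr ‖dtau τ (σ - (k : ℝ) ^ 2)‖ ^ b with hw
  have hw_nonneg (σ : ℝ) : 0 ≤ w σ :=
    mul_nonneg (jbr_rpow_nonneg _ _) (jbr_rpow_nonneg _ _)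
  have hw_translate (ξ : ℝ) :
      w σ ≤ (1 + |2 * Real.pi * ξ|) ^ |b| * w (σ + 2 * Real.pi * ξ) := by
    have h := jbr_norm_dtau_rpow_le_translate τ b (σ - (k : ℝ) ^ 2) (2 * Real.pi * ξ)
    rw [hw, mul_left_comm, add_sub_right_comm]
    exact mul_le_mul_of_nonneg_left h (jbr_rpow_nonneg _ _)
  have hcoeff (m : ℤ) : fourierCoeff (fun x => 𝓕⁻ g (m * τ) * u m x) k =
      𝓕⁻ g (m * τ) * fourierCoeff (u m) k := fourierCoeff.const_mul ..
  calc ENNReal.ofReal (xdAmplitude τ s b (fun n x => 𝓕⁻ g (n * τ) * u n x) k σ)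
      = ENNReal.ofReal (w σ) * ‖∫ ξ, g ξ * F (σ + 2 * Real.pi * ξ)‖ₑ := by
        simp only [xdAmplitude, hcoeff]
        rw [sampledFT_fourierInv_mul hg (hu.subset (support_fourierCoeff_subset u k)),
          ENNReal.ofReal_mul (hw_nonneg σ), ofReal_norm]
    _ ≤ ENNReal.ofReal (w σ) * ∫⁻ ξ, ‖g ξ * F (σ + 2 * Real.pi * ξ)‖ₑ := by
        gcongr
        exact enorm_integral_le_lintegral_enorm _
    _ = ∫⁻ ξ, ENNReal.ofReal (w σ) * (‖g ξ‖ₑ * ‖F (σ + 2 * Real.pi * ξ)‖ₑ) := by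
        simp only [enorm_mul]
        rw [lintegral_const_mul' _ _ ENNReal.ofReal_ne_top]
    _ ≤ ∫⁻ ξ, ENNReal.ofReal ((1 + |2 * Real.pi * ξ|) ^ |b| * w (σ + 2 * Real.pi * ξ)) *
          (‖g ξ‖ₑ * ‖F (σ + 2 * Real.pi * ξ)‖ₑ) := by
        gcongr with ξ
        exact hw_translate ξ
    _ = _ := by
        refine lintegral_congr fun ξ => ?_
        rw [xdAmplitude, ENNReal.ofReal_mul (hw_nonneg _), ofReal_norm,
          ENNReal.ofReal_mul (by positivity)]
        ring

theorem setLIntegral_xdAmplitude_fourierInv_mul_sq_le {τ : ℝ} (hτ : 0 < τ) (hg : Integrable g)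
    (hu : u.support.Finite) (s b : ℝ) (k : ℤ) :
    ∫⁻ σ in Set.Ioc (-(Real.pi / τ)) (Real.pi / τ),
        ENNReal.ofReal (xdAmplitude τ s b (fun n x => 𝓕⁻ g (n * τ) * u n x) k σ) ^ 2 ≤
      (∫⁻ ξ, ‖g ξ‖ₑ * ENNReal.ofReal ((1 + |2 * Real.pi * ξ|) ^ |b|)) ^ 2 *
        ∫⁻ σ in Set.Ioc (-(Real.pi / τ)) (Real.pi / τ),
          ENNReal.ofReal (xdAmplitude τ s b u k σ) ^ 2 := by
  have hIoc : Set.Ioc (-(Real.pi / τ)) (Real.pi / τ) =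
      Set.Ioc (-(Real.pi / τ)) (-(Real.pi / τ) + 2 * Real.pi / τ) := by
    congr 1
    ring
  have hweight : Measurable fun ξ : ℝ => ENNReal.ofReal ((1 + |2 * Real.pi * ξ|) ^ |b|) := by
    fun_prop
  have hcont := continuous_xdAmplitude hu τ s b k
  rw [hIoc]
  refine (lintegral_mono fun σ => pow_le_pow_left'
    (ofReal_xdAmplitude_fourierInv_mul_le hg hu τ s b k σ) 2).trans ?_
  exact setLIntegral_sq_lintegral_mul_translate_le
    (hg.aestronglyMeasurable.enorm.mul hweight.aemeasurable) hcont.measurable.ennreal_ofReal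
    ((periodic_xdAmplitude hτ.ne' s b u k).comp ENNReal.ofReal) (by positivity)
    (measurable_const_mul (2 * Real.pi)) _

theorem ofReal_XdNorm_fourierInv_mul_le {τ s : ℝ} (hτ : 0 < τ) (hg : Integrable g)
    (hu : ∀ n, InHs s (u n)) (hfin : u.support.Finite) (b : ℝ) :
    ENNReal.ofReal (XdNorm τ s b fun n x => 𝓕⁻ g (n * τ) * u n x) ≤
      (∫⁻ ξ, ‖g ξ‖ₑ * ENNReal.ofReal ((1 + |2 * Real.pi * ξ|) ^ |b|)) *
        ENNReal.ofReal (XdNorm τ s b u) := by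
  have hgu (n : ℤ) : InHs s fun x => 𝓕⁻ g (n * τ) * u n x := (hu n).const_mul _
  have hgu_fin : (Function.support fun (n : ℤ) x => 𝓕⁻ g (n * τ) * u n x).Finite :=
    hfin.subset fun n hn hun => hn (by ext; simp [hun])
  rw [← ENNReal.pow_le_pow_left_iff two_ne_zero, mul_pow, ofReal_XdNorm_sq hgu hgu_fin,
    ofReal_XdNorm_sq hu hfin, ← ENNReal.tsum_mul_left]
  exact ENNReal.tsum_le_tsum fun k =>
    setLIntegral_xdAmplitude_fourierInv_mul_sq_le hτ hg hfin s b k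

theorem discrete_bourgain_time_cutoff_general (s b : ℝ) {g : ℝ → ℂ}
    (hg : Integrable fun ξ => jbr ξ ^ |b| • g ξ) :
    ∃ C > (0 : ℝ), ∀ τ > 0, ∀ u : ℤ → Torus → ℂ,
      (∀ n, InHs s (u n)) → {n : ℤ | u n ≠ 0}.Finite →
      XdNorm τ s b (fun n x => 𝓕⁻ g (n * τ) * u n x) ≤ C * XdNorm τ s b u := by
  set K := ∫⁻ ξ, ‖g ξ‖ₑ * ENNReal.ofReal ((1 + |2 * Real.pi * ξ|) ^ |b|)
  have hK : K ≠ ∞ := lintegral_enorm_mul_one_add_abs_rpow_ne_top (abs_nonneg b) hg _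
  have hg_int : Integrable g := integrable_of_integrable_jbr_rpow_smul (abs_nonneg b) hg
  refine ⟨K.toReal + 1, by positivity, fun τ hτ u hu hfin => ?_⟩
  have hnonneg : 0 ≤ XdNorm τ s b u := Real.sqrt_nonneg _
  refine (ENNReal.ofReal_le_ofReal_iff (by positivity)).1 ?_
  calc ENNReal.ofReal (XdNorm τ s b fun n x => 𝓕⁻ g (n * τ) * u n x)
      ≤ K * ENNReal.ofReal (XdNorm τ s b u) := ofReal_XdNorm_fourierInv_mul_le hτ hg_int hu hfin b
    _ = ENNReal.ofReal (K.toReal * XdNorm τ s b u) := by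
        rw [ENNReal.ofReal_mul ENNReal.toReal_nonneg, ENNReal.ofReal_toReal hK]
    _ ≤ ENNReal.ofReal ((K.toReal + 1) * XdNorm τ s b u) := by
        gcongr
        exact le_add_of_nonneg_right zero_le_one

end Multiplier

/-- Uniform boundedness of multiplication by `η(nτ)` on `X^{s,b}_τ`. -/
theorem discrete_bourgain_time_cutoff (η : ℝ → ℝ) (hη : ContDiff ℝ (⊤ : ℕ∞) η)
    (hηc : HasCompactSupport η) (s b : ℝ) :
    ∃ C > (0 : ℝ), ∀ τ ∈ Set.Ioc (0 : ℝ) 1, ∀ u : ℤ → Torus → ℂ,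
      (∀ n, InHs s (u n)) → {n : ℤ | u n ≠ 0}.Finite →
      XdNorm τ s b (fun n x => (η ((n : ℝ) * τ) : ℂ) * u n x) ≤ C * XdNorm τ s b u := by
  obtain ⟨g, hgη, hg⟩ := exists_fourierInv_eq_of_contDiff_of_hasCompactSupport
    (ofRealCLM.contDiff.comp hη) (hηc.comp_left (g := ofRealCLM) rfl) |b|
  obtain ⟨C, hC, hbound⟩ := discrete_bourgain_time_cutoff_general s b hg
  refine ⟨C, hC, fun τ hτ u hu hfin => ?_⟩
  simpa [hgη] using hbound τ hτ.1 u hu hfin
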